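/- Let (A,S,Z,Φ) be a structured C*-algebra. For all a,b,c ∈ S, if a < c and b < c then a + b ∈ S and a + b < c. -/

import Mathlib

variable {A : Type*} [CStarAlgebra A] [PartialOrder A] [StarOrderedRing A]

/-- A structured C*-algebra `(A, S, Z, Φ)`. -/
structure StructuredCStar (A : Type*) [CStarAlgebra A] [PartialOrder A]
    [StarOrderedRing A] where
  /-- The expectation. -/
  Φ : A →ₗ[ℂ] A
  /-- The distinguished closed *-subsemigroup. -/
  S : Set A
  /-- The distinguished central C*-subalgebra. -/
  Z : Set A
  Φ_idem : ∀ a : A, Φ (Φ a) = Φ a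
  Φ_contractive : ∀ a : A, ‖Φ a‖ ≤ ‖a‖
  Φ_pos : ∀ a : A, 0 ≤ a → 0 ≤ Φ a
  Φ_mul_left : ∀ a b : A, Φ (Φ a * b) = Φ a * Φ b
  Φ_mul_right : ∀ a b : A, Φ (a * Φ b) = Φ a * Φ b
  S_isClosed : IsClosed S
  S_mul : ∀ a ∈ S, ∀ b ∈ S, a * b ∈ S
  S_star : ∀ a ∈ S, star a ∈ S
  S_smul : ∀ (c : ℂ), ∀ a ∈ S, c • a ∈ S
  Z_sub_S : Z ⊆ S
  Z_isClosed : IsClosed Z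
  Z_add : ∀ a ∈ Z, ∀ b ∈ Z, a + b ∈ Z
  Z_mul : ∀ a ∈ Z, ∀ b ∈ Z, a * b ∈ Z
  Z_star : ∀ a ∈ Z, star a ∈ Z
  Z_smul : ∀ (c : ℂ), ∀ a ∈ Z, c • a ∈ Z
  Z_fixed : ∀ z ∈ Z, Φ z = z
  Z_central : ∀ z ∈ Z, ∀ a : A, z * Φ a = Φ a * z
  PhiS_add : ∀ x ∈ Φ '' S, ∀ y ∈ Φ '' S, x + y ∈ Φ '' S
  PhiS_ideal_right : ∀ x ∈ Φ '' S, ∀ a : A, x * Φ a ∈ Φ '' S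
  PhiS_ideal_left : ∀ x ∈ Φ '' S, ∀ a : A, Φ a * x ∈ Φ '' S
  S_sq_sub_PhiS : ∀ s ∈ S, star s * s ∈ Φ '' S
  PhiS_sub_S : ∀ s ∈ S, Φ s ∈ S

namespace StructuredCStar

variable (𝒜 : StructuredCStar A)

/-- `a <_s b` : domination witnessed by `s`. -/
def domBy (a s b : A) : Prop :=
  a = a * s * b ∧ a = b * s * a ∧
  a * s ∈ 𝒜.Φ '' 𝒜.S ∧ s * a ∈ 𝒜.Φ '' 𝒜.S ∧
  b * s ∈ 𝒜.Z ∧ s * b ∈ 𝒜.Z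

/-- `a < b` : domination. -/
def dom (a b : A) : Prop := ∃ s ∈ 𝒜.S, 𝒜.domBy a s b

/-- `N ⊆ S` is binormal. -/
def Binormal (N : Set A) : Prop :=
  ∀ a ∈ 𝒜.S, ∀ b ∈ 𝒜.S, a * b ∈ N → ∀ z ∈ N, a * z * b ∈ N

/-- `B ⊆ S` is bistable. -/
def Bistable (B : Set A) : Prop :=
  ∀ a ∈ 𝒜.S, ∀ b ∈ 𝒜.S, a * b ∈ B → 𝒜.Φ a * b ∈ B ∧ a * 𝒜.Φ b ∈ B

/-- `P ⊆ S` is productive. -/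
def Productive (P : Set A) : Prop :=
  ∀ a ∈ 𝒜.S, 𝒜.Φ a ∈ closure ((a * ·) '' P) ∧ 𝒜.Φ a ∈ closure ((· * a) '' P)

end StructuredCStar

/-!
If `s` witnesses `a < c`, then `s * c` and `c * s` are central in the range of `Φ`, hence normal,
and `s` intertwines them. By the Fuglede–Putnam–Rosenblum theorem `s` also intertwines their
adjoints, so that `star (s * c) * s = s * star s * star c` is again a witness, now of the form
`x * star c` with `x ∈ Φ[S]`. Such elements can be added without leaving `S`, and if `σ` and `τ`
are witnesses of this form for `a < c` and `b < c`, then `σ + τ - σ * c * τ` is one for `a + b < c`,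
because `1 - (σ + τ - σ * c * τ) * c = (1 - σ * c) * (1 - τ * c)` is annihilated by left
multiplication with `a` and with `b`, and symmetrically on the other side.
-/

section NonUnitalRing

variable {R : Type*} [NonUnitalRing R] {a p q : R}

theorem mul_add_sub_mul_eq_self (h : a * p = a) : a * (p + q - p * q) = a := by
  rw [mul_sub, mul_add, ← mul_assoc, h, add_sub_cancel_right]

theorem add_sub_mul_mul_eq_self (h : q * a = a) : (p + q - p * q) * a = a := by
  rw [sub_mul, add_mul, mul_assoc, h, add_sub_cancel_left]

end NonUnitalRing

section CStarAlgebra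

variable {B : Type*} [CStarAlgebra B] {a p : B}

theorem mul_star_eq_self_of_isStarNormal (hp : IsStarNormal p) (h : a * p = a) :
    a * star p = a := by
  have hap : SemiconjBy a p 1 := h.trans (one_mul a).symm
  simpa only [star_one, one_mul] using (hap.star_right hp .one).eq

theorem star_mul_eq_self_of_isStarNormal (hp : IsStarNormal p) (h : p * a = a) :
    star p * a = a := by
  have hap : SemiconjBy a 1 p := (mul_one a).trans h.symm
  simpa only [star_one, mul_one] using (hap.star_right .one hp).eq.symm

end CStarAlgebra

namespace StructuredCStar

variable {𝒜 : StructuredCStar A} {a b c s t x y z : A}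

theorem commute_of_mem_Z (hy : y ∈ 𝒜.Z) (hz : z ∈ 𝒜.Z) : Commute y z := by
  simpa only [Commute, SemiconjBy, 𝒜.Z_fixed z hz] using 𝒜.Z_central y hy z

theorem isStarNormal_of_mem_Z (hz : z ∈ 𝒜.Z) : IsStarNormal z :=
  ⟨commute_of_mem_Z (𝒜.Z_star z hz) hz⟩

theorem sub_mem_Z (hy : y ∈ 𝒜.Z) (hz : z ∈ 𝒜.Z) : y - z ∈ 𝒜.Z := by
  simpa only [neg_one_smul, ← sub_eq_add_neg] using 𝒜.Z_add y hy _ (𝒜.Z_smul (-1) z hz)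

theorem mem_S_of_mem_image (hx : x ∈ 𝒜.Φ '' 𝒜.S) : x ∈ 𝒜.S := by
  obtain ⟨s, hs, rfl⟩ := hx
  exact 𝒜.PhiS_sub_S s hs

theorem sub_mem_image (hx : x ∈ 𝒜.Φ '' 𝒜.S) (hy : y ∈ 𝒜.Φ '' 𝒜.S) :
    x - y ∈ 𝒜.Φ '' 𝒜.S := by
  obtain ⟨s, hs, rfl⟩ := hy
  have hneg : -𝒜.Φ s ∈ 𝒜.Φ '' 𝒜.S :=
    ⟨(-1 : ℂ) • s, 𝒜.S_smul _ s hs, by rw [map_smul, neg_one_smul]⟩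
  simpa only [sub_eq_add_neg] using 𝒜.PhiS_add x hx _ hneg

theorem mul_mem_image_of_mem_Z_right (hx : x ∈ 𝒜.Φ '' 𝒜.S) (hz : z ∈ 𝒜.Z) :
    x * z ∈ 𝒜.Φ '' 𝒜.S := by
  simpa only [𝒜.Z_fixed z hz] using 𝒜.PhiS_ideal_right x hx z

theorem mul_mem_image_of_mem_Z_left (hz : z ∈ 𝒜.Z) (hx : x ∈ 𝒜.Φ '' 𝒜.S) :
    z * x ∈ 𝒜.Φ '' 𝒜.S := by
  simpa only [𝒜.Z_fixed z hz] using 𝒜.PhiS_ideal_left x hx z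

theorem mul_star_mem_image (hs : s ∈ 𝒜.S) : s * star s ∈ 𝒜.Φ '' 𝒜.S := by
  simpa only [star_star] using 𝒜.S_sq_sub_PhiS _ (𝒜.S_star s hs)

theorem star_mul_mul_eq_mul_star_mul_star (hsc : s * c ∈ 𝒜.Z) (hcs : c * s ∈ 𝒜.Z) :
    star (s * c) * s = s * star s * star c := by
  have hs : SemiconjBy s (c * s) (s * c) := (mul_assoc s c s).symm
  have hs_star : s * star (c * s) = star (s * c) * s :=
    hs.star_right (isStarNormal_of_mem_Z hcs) (isStarNormal_of_mem_Z hsc)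
  rw [← hs_star, star_mul, mul_assoc]

theorem domBy.mul_mem_Z (h : 𝒜.domBy a s c) : s * c ∈ 𝒜.Z := h.2.2.2.2.2

theorem domBy.mem_S (h : 𝒜.domBy a s c) (hc : c ∈ 𝒜.S) : a ∈ 𝒜.S := by
  obtain ⟨ha, -, hasΦ, -⟩ := h
  rw [ha]
  exact 𝒜.S_mul _ (mem_S_of_mem_image hasΦ) c hc

theorem domBy.mul_star_mul_star (h : 𝒜.domBy a s c) :
    𝒜.domBy a (s * star s * star c) c := by
  obtain ⟨hasc, hcsa, hasΦ, hsaΦ, hcs, hsc⟩ := h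
  have hstar : s * star s * star c = s * star (c * s) := by rw [star_mul, mul_assoc]
  have hstar' := star_mul_mul_eq_mul_star_mul_star hsc hcs
  have ha_sc : a * star (s * c) = a :=
    mul_star_eq_self_of_isStarNormal (isStarNormal_of_mem_Z hsc) (by rw [← mul_assoc, ← hasc])
  have ha_cs : star (c * s) * a = a :=
    star_mul_eq_self_of_isStarNormal (isStarNormal_of_mem_Z hcs) hcsa.symm
  refine ⟨?_, ?_, ?_, ?_, ?_, ?_⟩
  · rw [← hstar', ← mul_assoc, ha_sc, ← hasc]
  · rw [hstar, mul_assoc, mul_assoc, ha_cs, ← mul_assoc, ← hcsa]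
  · rw [hstar, ← mul_assoc]
    exact mul_mem_image_of_mem_Z_right hasΦ (𝒜.Z_star _ hcs)
  · rw [← hstar', mul_assoc]
    exact mul_mem_image_of_mem_Z_left (𝒜.Z_star _ hsc) hsaΦ
  · rw [hstar, ← mul_assoc]
    exact 𝒜.Z_mul _ hcs _ (𝒜.Z_star _ hcs)
  · rw [← hstar', mul_assoc]
    exact 𝒜.Z_mul _ (𝒜.Z_star _ hsc) _ hsc

theorem dom.exists_mem_image (h : 𝒜.dom a c) :
    ∃ x ∈ 𝒜.Φ '' 𝒜.S, 𝒜.domBy a (x * star c) c := by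
  obtain ⟨s, hs, hasc⟩ := h
  exact ⟨s * star s, mul_star_mem_image hs, hasc.mul_star_mul_star⟩

theorem domBy.add (ha : 𝒜.domBy a s c) (hb : 𝒜.domBy b t c) :
    𝒜.domBy (a + b) (s + t - s * c * t) c := by
  obtain ⟨hasc, hcsa, hasΦ, hsaΦ, hcs, hsc⟩ := ha
  obtain ⟨hbtc, hctb, hbtΦ, htbΦ, hct, htc⟩ := hb
  set u := s + t - s * c * t with hu
  have huc : u * c = s * c + t * c - s * c * (t * c) := by rw [hu]; noncomm_ring
  have hcu : c * u = c * s + c * t - c * s * (c * t) := by rw [hu]; noncomm_ring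
  have hucZ : u * c ∈ 𝒜.Z := by
    rw [huc]
    exact sub_mem_Z (𝒜.Z_add _ hsc _ htc) (𝒜.Z_mul _ hsc _ htc)
  have hcuZ : c * u ∈ 𝒜.Z := by
    rw [hcu]
    exact sub_mem_Z (𝒜.Z_add _ hcs _ hct) (𝒜.Z_mul _ hcs _ hct)
  refine ⟨?_, ?_, ?_, ?_, hcuZ, hucZ⟩
  · have ha_sc : a * (s * c) = a := by rw [← mul_assoc, ← hasc]
    have hb_tc : b * (t * c) = b := by rw [← mul_assoc, ← hbtc]
    have ha_uc : a * (u * c) = a := by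
      rw [huc, mul_add_sub_mul_eq_self ha_sc]
    have hb_uc : b * (u * c) = b := by
      rw [huc, add_comm, (commute_of_mem_Z hsc htc).eq, mul_add_sub_mul_eq_self hb_tc]
    rw [mul_assoc, add_mul, ha_uc, hb_uc]
  · have ha_cu : c * u * a = a := by
      rw [hcu, add_comm, (commute_of_mem_Z hcs hct).eq, add_sub_mul_mul_eq_self hcsa.symm]
    have hb_cu : c * u * b = b := by
      rw [hcu, add_sub_mul_mul_eq_self hctb.symm]
    rw [mul_add, ha_cu, hb_cu]
  · have hsplit : (a + b) * u = a * s * (c * u) + b * t * (c * u) := by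
      rw [← mul_assoc, ← mul_assoc, ← hasc, ← hbtc, add_mul]
    rw [hsplit]
    exact 𝒜.PhiS_add _ (mul_mem_image_of_mem_Z_right hasΦ hcuZ) _
      (mul_mem_image_of_mem_Z_right hbtΦ hcuZ)
  · have hsplit : u * (a + b) = u * c * (s * a) + u * c * (t * b) := by
      rw [mul_assoc, mul_assoc, ← mul_assoc c, ← mul_assoc c, ← hcsa, ← hctb, mul_add]
    rw [hsplit]
    exact 𝒜.PhiS_add _ (mul_mem_image_of_mem_Z_left hucZ hsaΦ) _
      (mul_mem_image_of_mem_Z_left hucZ htbΦ)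

theorem add_sub_mul_mul_mem_S (hc : c ∈ 𝒜.S) (hx : x ∈ 𝒜.Φ '' 𝒜.S) (hy : y ∈ 𝒜.Φ '' 𝒜.S)
    (hz : z ∈ 𝒜.Z) : x * c + y * c - z * (y * c) ∈ 𝒜.S := by
  have hfactor : x * c + y * c - z * (y * c) = (x + y - z * y) * c := by noncomm_ring
  rw [hfactor]
  have hxy : x + y - z * y ∈ 𝒜.Φ '' 𝒜.S :=
    sub_mem_image (𝒜.PhiS_add x hx y hy) (mul_mem_image_of_mem_Z_left hz hy)
  exact 𝒜.S_mul _ (mem_S_of_mem_image hxy) c hc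

end StructuredCStar

/-- dominated sums: if `a, b < c` then `a + b ∈ S` and `a + b < c`. -/
theorem StructuredCStar.dom_add (𝒜 : StructuredCStar A) {a b c : A}
    (ha : a ∈ 𝒜.S) (hb : b ∈ 𝒜.S) (hc : c ∈ 𝒜.S)
    (hac : 𝒜.dom a c) (hbc : 𝒜.dom b c) :
    a + b ∈ 𝒜.S ∧ 𝒜.dom (a + b) c := by
  obtain ⟨x, hx, hacx⟩ := hac.exists_mem_image
  obtain ⟨y, hy, hbcy⟩ := hbc.exists_mem_image
  have hadd := hacx.add hbcy
  have hS := add_sub_mul_mul_mem_S (𝒜.S_star c hc) hx hy hacx.mul_mem_Z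
  exact ⟨hadd.mem_S hc, _, hS, hadd⟩
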